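/- Let ε > 0 and H_ε = T_ε + V_ε on ℓ²((εℤ)^d), where (T_ε u)(x) = Σ_{γ∈(εℤ)^d} a_γ(x,ε) u(x+γ) with real coefficients satisfying a_γ(x,ε) = a_{−γ}(x+γ,ε) for all x, γ, and for every c > 0 there is C > 0 with Σ_{γ∈(εℤ)^d} e^{2c|γ|/ε} a_γ(x,ε)² ≤ C² uniformly in x and ε; V_ε is real multiplication. Let Σ ⊂ ℝ^d, Σ_ε := Σ ∩ (εℤ)^d, and let H_ε^Σ := 1_{Σ_ε} H_ε restricted to ℓ²_{Σ_ε} (functions in ℓ²((εℤ)^d) vanishing outside Σ_ε). Let φ : Σ → ℝ be Lipschitz and constant outside some bounded set. Then for every real-valued v ∈ ℓ²_{Σ_ε} with V_ε v ∈ ℓ²: ⟨(e^{φ/ε} H_ε^Σ e^{−φ/ε}) v, v⟩ = ⟨(V_ε + V^φ_{ε,Σ}) v, v⟩ − (1/2) Σ_{x∈Σ_ε} Σ_{γ : x+γ∈Σ_ε} a_γ(x,ε) cosh((φ(x) − φ(x+γ))/ε) (v(x) − v(x+γ))², where V^φ_{ε,Σ}(x) := Σ_{γ : x+γ∈Σ_ε}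 a_γ(x,ε) cosh((φ(x) − φ(x+γ))/ε), and all the series converge absolutely. -/

import Mathlib

open scoped RealInnerProductSpace Classical
noncomputable section

/-- `ℝ^d` as a Euclidean space. -/
abbrev Ed (d : ℕ) := EuclideanSpace ℝ (Fin d)

/-- The lattice vector `η ∈ ℤ^d` regarded as a vector of `ℝ^d`. -/
def zv {d : ℕ} (η : Fin d → ℤ) : Ed d :=
  (EuclideanSpace.equiv (Fin d) ℝ).symm (fun i => (η i : ℝ))

/-- The lattice point `εm ∈ (εℤ)^d` of integer coordinates `m`, as a point of `ℝ^d`. -/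
def ept (d : ℕ) (ε : ℝ) (m : Fin d → ℤ) : Ed d := ε • zv m

/-!
The matrix `a_γ(x) e^{(φ(x) - φ(x + γ))/ε}` of the conjugated operator has symmetric part
`a_γ(x) cosh((φ(x) - φ(x + γ))/ε)`, and a real quadratic form sees only the symmetric part. For a
symmetric matrix `k`, writing `2 v(x) v(y) = v(x)² + v(y)² - (v(x) - v(y))²` and exchanging `x` and
`y` in the second term gives `∑ k v(x) v(y) = ∑ k v(x)² - ½ ∑ k (v(x) - v(y))²`. All rearrangements
are justified by Schur's test: if `K` is a Lipschitz constant of `φ`, the conjugation costs at most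
`e^{K|γ|/ε}`, which decay of `a_γ` at any rate `c > K` absorbs.
-/

section SchurTest

variable {ι : Type*} {k : ι → ι → ℝ} {u v U f : ι → ℝ}

/-- One half of Schur's condition on an infinite matrix: the absolute row sums are finite and
uniformly bounded. The other half, on columns, is the same condition on `Function.swap k`. -/
def HasBoundedRows (k : ι → ι → ℝ) : Prop :=
  ∃ M : ℝ, ∀ x, Summable (fun y => |k x y|) ∧ ∑' y, |k x y| ≤ M

/-- The symmetric part of a real matrix, which has the same quadratic form. -/
def symmPart (k : ι → ι → ℝ) (x y : ι) : ℝ := (k x y + k y x) / 2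

theorem swap_symmPart (k : ι → ι → ℝ) : Function.swap (symmPart k) = symmPart k :=
  funext₂ fun _ _ => congrArg (· / 2) (add_comm _ _)

theorem HasBoundedRows.summable_abs (hk : HasBoundedRows k) (x : ι) :
    Summable fun y => |k x y| :=
  (hk.choose_spec x).1

theorem hasBoundedRows_symmPart (hk : HasBoundedRows k)
    (hk' : HasBoundedRows (Function.swap k)) : HasBoundedRows (symmPart k) := by
  obtain ⟨M, hM⟩ := hk
  obtain ⟨N, hN⟩ := hk'
  refine ⟨M + N, fun x => ?_⟩
  have hle (y : ι) : |symmPart k x y| ≤ |k x y| + |Function.swap k x y| := by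
    rw [symmPart, abs_div, abs_two]
    exact (half_le_self (abs_nonneg _)).trans (abs_add_le _ _)
  have hadd := (hM x).1.add (hN x).1
  have hsum := Summable.of_nonneg_of_le (fun _ => abs_nonneg _) hle hadd
  refine ⟨hsum, (hsum.tsum_le_tsum hle hadd).trans ?_⟩
  rw [(hM x).1.tsum_add (hN x).1]
  exact add_le_add (hM x).2 (hN x).2

theorem HasBoundedRows.of_abs_le_sub {G : Type*} [AddGroup G] {k : G → G → ℝ} {W : G → ℝ}
    (hW : Summable W) (h : ∀ x y, |k x y| ≤ W (y - x)) : HasBoundedRows k := by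
  refine ⟨∑' z, W z, fun x => ?_⟩
  have hWx : Summable (fun y => W (y - x)) := (Equiv.subRight x).summable_iff.2 hW
  have hsum := Summable.of_nonneg_of_le (fun _ => abs_nonneg _) (h x) hWx
  exact ⟨hsum, (hsum.tsum_le_tsum (h x) hWx).trans_eq ((Equiv.subRight x).tsum_eq W)⟩

theorem HasBoundedRows.summable_mul_fst (hk : HasBoundedRows k) (hf : Summable f) :
    Summable (fun p : ι × ι => k p.1 p.2 * f p.1) := by
  obtain ⟨M, hM⟩ := hk
  refine Summable.of_norm ((summable_prod_of_nonneg fun _ => norm_nonneg _).2 ⟨fun x => ?_, ?_⟩)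
  · simpa only [norm_mul, Real.norm_eq_abs] using (hM x).1.mul_right |f x|
  · refine Summable.of_nonneg_of_le (fun _ => tsum_nonneg fun _ => norm_nonneg _) (fun x => ?_)
      (hf.abs.mul_left M)
    simp only [norm_mul, Real.norm_eq_abs, tsum_mul_right]
    exact mul_le_mul_of_nonneg_right (hM x).2 (abs_nonneg _)

theorem HasBoundedRows.summable_mul_snd (hk' : HasBoundedRows (Function.swap k))
    (hf : Summable f) : Summable (fun p : ι × ι => k p.1 p.2 * f p.2) :=
  (Equiv.prodComm ι ι).summable_iff.2 (hk'.summable_mul_fst hf)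

theorem HasBoundedRows.summable_mul_mul (hk : HasBoundedRows k)
    (hk' : HasBoundedRows (Function.swap k)) (hu : Summable fun x => u x ^ 2)
    (hv : Summable fun x => v x ^ 2) :
    Summable (fun p : ι × ι => k p.1 p.2 * u p.1 * v p.2) := by
  refine Summable.of_norm_bounded
    ((hk.summable_mul_fst hu).abs.add (hk'.summable_mul_snd hv).abs) fun p => ?_
  have hyoung : |u p.1 * v p.2| ≤ u p.1 ^ 2 + v p.2 ^ 2 := by
    rw [abs_le]
    constructor <;> nlinarith [sq_nonneg (u p.1 + v p.2), sq_nonneg (u p.1 - v p.2)]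
  calc ‖k p.1 p.2 * u p.1 * v p.2‖ = |k p.1 p.2| * |u p.1 * v p.2| := by
        rw [Real.norm_eq_abs, mul_assoc, abs_mul]
    _ ≤ |k p.1 p.2| * (u p.1 ^ 2 + v p.2 ^ 2) := by gcongr
    _ = |k p.1 p.2 * u p.1 ^ 2| + |k p.1 p.2 * v p.2 ^ 2| := by
        simp only [abs_mul, abs_sq, mul_add]

theorem HasBoundedRows.summable_mul_sub_sq (hk : HasBoundedRows k)
    (hk' : HasBoundedRows (Function.swap k)) (hv : Summable fun x => v x ^ 2) :
    Summable (fun p : ι × ι => k p.1 p.2 * (v p.1 - v p.2) ^ 2) := by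
  refine (((hk.summable_mul_fst hv).add (hk'.summable_mul_snd hv)).sub
    ((hk.summable_mul_mul hk' hv hv).mul_left 2)).congr fun p => ?_
  ring

theorem tsum_symmPart_mul_mul (hk : HasBoundedRows k) (hk' : HasBoundedRows (Function.swap k))
    (hv : Summable fun x => v x ^ 2) :
    ∑' p : ι × ι, symmPart k p.1 p.2 * v p.1 * v p.2 =
      ∑' p : ι × ι, k p.1 p.2 * v p.1 * v p.2 := by
  have hswap : ∑' p : ι × ι, Function.swap k p.1 p.2 * v p.1 * v p.2 =
      ∑' p : ι × ι, k p.1 p.2 * v p.1 * v p.2 := by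
    rw [← (Equiv.prodComm ι ι).tsum_eq fun p => k p.1 p.2 * v p.1 * v p.2]
    exact tsum_congr fun p => mul_right_comm _ _ _
  calc ∑' p : ι × ι, symmPart k p.1 p.2 * v p.1 * v p.2
      = ∑' p : ι × ι, (k p.1 p.2 * v p.1 * v p.2 +
          Function.swap k p.1 p.2 * v p.1 * v p.2) / 2 :=
        tsum_congr fun p => by simp only [symmPart, Function.swap]; ring
    _ = ∑' p : ι × ι, k p.1 p.2 * v p.1 * v p.2 := by
        rw [tsum_div_const, (hk.summable_mul_mul hk' hv hv).tsum_add
          (hk'.summable_mul_mul hk hv hv), hswap, add_self_div_two]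

theorem tsum_mul_mul_eq_sub_half_tsum_mul_sub_sq (hk : HasBoundedRows k)
    (hsymm : Function.swap k = k) (hv : Summable fun x => v x ^ 2) :
    ∑' p : ι × ι, k p.1 p.2 * v p.1 * v p.2 =
      ∑' p : ι × ι, k p.1 p.2 * v p.1 ^ 2
        - (1 / 2) * ∑' p : ι × ι, k p.1 p.2 * (v p.1 - v p.2) ^ 2 := by
  have hk' : HasBoundedRows (Function.swap k) := hsymm.symm ▸ hk
  have hfst := hk.summable_mul_fst hv
  have hsnd := hk'.summable_mul_snd hv
  have hcross := (hk.summable_mul_mul hk' hv hv).mul_left 2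
  have hswap : ∑' p : ι × ι, k p.1 p.2 * v p.2 ^ 2 = ∑' p : ι × ι, k p.1 p.2 * v p.1 ^ 2 := by
    rw [← (Equiv.prodComm ι ι).tsum_eq fun p => k p.1 p.2 * v p.1 ^ 2]
    exact tsum_congr fun p => congrArg (· * v p.2 ^ 2) (congrFun₂ hsymm p.2 p.1)
  have hexpand : ∑' p : ι × ι, k p.1 p.2 * (v p.1 - v p.2) ^ 2 =
      2 * (∑' p : ι × ι, k p.1 p.2 * v p.1 ^ 2)
        - 2 * ∑' p : ι × ι, k p.1 p.2 * v p.1 * v p.2 := by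
    rw [two_mul (∑' p : ι × ι, k p.1 p.2 * v p.1 ^ 2)]
    nth_rw 2 [← hswap]
    rw [← tsum_mul_left, ← hfst.tsum_add hsnd, ← (hfst.add hsnd).tsum_sub hcross]
    exact tsum_congr fun p => by ring
  rw [hexpand]
  ring

theorem tsum_mul_add_mul_mul (k : ι → ι → ℝ) (U v : ι → ℝ) (x : ι) :
    ((∑' y, k x y * v y) + U x * v x) * v x =
      (∑' y, k x y * v x * v y) + U x * v x ^ 2 := by
  simp only [mul_right_comm _ (v x), tsum_mul_right]
  ring

theorem HasBoundedRows.summable_form (hk : HasBoundedRows k)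
    (hk' : HasBoundedRows (Function.swap k)) (hv : Summable fun x => v x ^ 2)
    (hU : Summable fun x => U x * v x ^ 2) :
    Summable (fun x => ((∑' y, k x y * v y) + U x * v x) * v x) := by
  simp only [tsum_mul_add_mul_mul]
  exact (hk.summable_mul_mul hk' hv hv).prod.add hU

theorem tsum_form_eq (hk : HasBoundedRows k) (hk' : HasBoundedRows (Function.swap k))
    (hv : Summable fun x => v x ^ 2) (hU : Summable fun x => U x * v x ^ 2) :
    ∑' x, ((∑' y, k x y * v y) + U x * v x) * v x =
      ∑' x, (U x + ∑' y, symmPart k x y) * v x ^ 2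
        - (1 / 2) * ∑' p : ι × ι, symmPart k p.1 p.2 * (v p.1 - v p.2) ^ 2 := by
  have hs := hasBoundedRows_symmPart hk hk'
  have hcross := hk.summable_mul_mul hk' hv hv
  have hdiag := hs.summable_mul_fst hv
  simp only [tsum_mul_add_mul_mul, add_mul (U _), ← tsum_mul_right]
  rw [hcross.prod.tsum_add hU, hU.tsum_add hdiag.prod, ← hcross.tsum_prod, ← hdiag.tsum_prod,
    ← tsum_symmPart_mul_mul hk hk' hv,
    tsum_mul_mul_eq_sub_half_tsum_mul_sub_sq hs (swap_symmPart k) hv]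
  ring

end SchurTest

section LatticeExponential

theorem summable_exp_neg_mul_abs_int {δ : ℝ} (hδ : 0 < δ) :
    Summable (fun n : ℤ => Real.exp (-(δ * |(n : ℝ)|))) := by
  have h : Summable (fun n : ℕ => Real.exp (n * -δ)) :=
    Real.summable_exp_nat_mul_iff.2 (neg_neg_of_pos hδ)
  refine Summable.of_nat_of_neg ?_ ?_ <;> simpa [mul_comm] using h

theorem summable_prod_pi_fin {ι : Type*} {f : ι → ℝ} (hf0 : ∀ x, 0 ≤ f x) (hf : Summable f) :
    ∀ n : ℕ, Summable (fun x : Fin n → ι => ∏ i, f (x i))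
  | 0 => Summable.of_finite
  | n + 1 => by
    rw [← (Fin.consEquiv fun _ : Fin (n + 1) => ι).summable_iff]
    refine (hf.mul_of_nonneg (summable_prod_pi_fin hf0 hf n) hf0
      fun x => Finset.prod_nonneg fun i _ => hf0 (x i)).congr fun p => ?_
    simp [Fin.consEquiv, Fin.prod_univ_succ]

theorem sum_abs_le_mul_norm_zv {d : ℕ} (η : Fin d → ℤ) : ∑ i, |(η i : ℝ)| ≤ d * ‖zv η‖ := by
  have hcoord (i : Fin d) : |(η i : ℝ)| ≤ ‖zv η‖ := by
    simpa [zv] using PiLp.norm_apply_le (zv η) i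
  simpa using Finset.sum_le_sum fun i (_ : i ∈ Finset.univ) => hcoord i

theorem summable_exp_neg_mul_norm_zv (d : ℕ) {δ : ℝ} (hδ : 0 < δ) :
    Summable (fun η : Fin d → ℤ => Real.exp (-(δ * ‖zv η‖))) := by
  have hd : (0 : ℝ) < d + 1 := by positivity
  refine Summable.of_nonneg_of_le (fun _ => (Real.exp_pos _).le) (fun η => ?_)
    (summable_prod_pi_fin (fun _ => (Real.exp_pos _).le)
      (summable_exp_neg_mul_abs_int (div_pos hδ hd)) d)
  rw [← Real.exp_sum, Finset.sum_neg_distrib, ← Finset.mul_sum, Real.exp_le_exp, neg_le_neg_iff,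
    div_mul_eq_mul_div, div_le_iff₀ hd, mul_assoc]
  gcongr
  linarith [sum_abs_le_mul_norm_zv η, norm_nonneg (zv η)]

end LatticeExponential

theorem abs_le_of_tsum_exp_mul_sq_le {κ : Type*} {r f : κ → ℝ} {c C : ℝ} (hC : 0 ≤ C)
    (hsum : Summable fun i => Real.exp (2 * c * r i) * f i ^ 2)
    (hle : ∑' i, Real.exp (2 * c * r i) * f i ^ 2 ≤ C ^ 2) (i : κ) :
    |f i| ≤ C * Real.exp (-(c * r i)) := by
  have hsq : (Real.exp (c * r i) * f i) ^ 2 ≤ C ^ 2 := by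
    rw [mul_pow, ← Real.exp_nat_mul, Nat.cast_ofNat, ← mul_assoc]
    exact (hsum.le_tsum i fun _ _ => by positivity).trans hle
  have habs := abs_le_of_sq_le_sq hsq hC
  rwa [abs_mul, Real.abs_exp, mul_comm, ← le_div_iff₀ (Real.exp_pos _), div_eq_mul_inv,
    ← Real.exp_neg] at habs

theorem nonneg_of_abs_le_mul_exp {α C t : ℝ} (h : |α| ≤ C * Real.exp t) : 0 ≤ C :=
  nonneg_of_mul_nonneg_left ((abs_nonneg α).trans h) (Real.exp_pos t)

theorem abs_mul_exp_le {α t r B C K c : ℝ} (hα : |α| ≤ C * Real.exp (-(c * r)))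
    (ht : t ≤ B + K * r) :
    |α * Real.exp t| ≤ Real.exp B * (C * Real.exp (-((c - K) * r))) := by
  calc |α * Real.exp t| = |α| * Real.exp t := by rw [abs_mul, Real.abs_exp]
    _ ≤ C * Real.exp (-(c * r)) * Real.exp (B + K * r) :=
        mul_le_mul hα (Real.exp_le_exp.2 ht) (Real.exp_pos _).le ((abs_nonneg _).trans hα)
    _ = Real.exp B * (C * Real.exp (-((c - K) * r))) := by
        rw [mul_assoc, mul_left_comm (Real.exp B), ← Real.exp_add, ← Real.exp_add]
        ring_nf

theorem exists_sub_le_add_mul_dist {X : Type*} [PseudoMetricSpace X] {f : X → ℝ} {s : Set X}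
    {K : NNReal} (hf : LipschitzOnWith K f s) (x : X) :
    ∃ B : ℝ, ∀ y ∈ s, f x - f y ≤ B + K * dist x y := by
  obtain ⟨g, hg, hfg⟩ := hf.extend_real
  refine ⟨f x - g x, fun y hy => ?_⟩
  have hxy := (le_abs_self _).trans (hg.dist_le_mul x y)
  rw [hfg hy]
  linarith

section SquareSummable

variable {ι : Type*} {u v : ι → ℝ}

theorem summable_sq_of_memℓp_two (hv : Memℓp v 2) : Summable fun x => v x ^ 2 := by
  simpa using hv.summable (by norm_num)

theorem summable_mul_of_memℓp_two (hu : Memℓp u 2) (hv : Memℓp v 2) :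
    Summable fun x => u x * v x := by
  simpa [mul_comm] using lp.summable_inner (𝕜 := ℝ) ⟨u, hu⟩ ⟨v, hv⟩

end SquareSummable

section DirichletKernel

variable {d : ℕ} {ε : ℝ} {a : (Fin d → ℤ) → Ed d → ℝ} {Sig : Set (Ed d)} {φ : Ed d → ℝ}
  {v : (Fin d → ℤ) → ℝ} {C c : ℝ} {K : NNReal}

/-- The matrix of `e^{φ/ε} T_ε^Σ e^{-φ/ε}`, indexed by the integer coordinates of lattice points:
the entry at `(m, n)` couples `x = εm` to `x + γ = εn`. -/
def dirichletConj (ε : ℝ) (a : (Fin d → ℤ) → Ed d → ℝ) (Sig : Set (Ed d)) (φ : Ed d → ℝ)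
    (m n : Fin d → ℤ) : ℝ :=
  if ept d ε m ∈ Sig ∧ ept d ε n ∈ Sig then
    a (n - m) (ept d ε m) * Real.exp ((φ (ept d ε m) - φ (ept d ε n)) / ε)
  else 0

theorem ept_add (d : ℕ) (ε : ℝ) (m η : Fin d → ℤ) :
    ept d ε (m + η) = ept d ε m + ε • zv η := by
  ext i
  simp [ept, zv, mul_add]

theorem zv_sub (m n : Fin d → ℤ) : zv (m - n) = zv m - zv n := by
  ext i
  simp [zv]

theorem dist_ept (hε : 0 ≤ ε) (m n : Fin d → ℤ) :
    dist (ept d ε m) (ept d ε n) = ε * ‖zv (n - m)‖ := by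
  rw [dist_comm, dist_eq_norm, ept, ept, ← smul_sub, ← zv_sub, norm_smul, Real.norm_of_nonneg hε]

theorem symmPart_dirichletConj_add
    (hsym : ∀ (η : Fin d → ℤ) (x : Ed d), a η x = a (-η) (x + ε • zv η)) (m η : Fin d → ℤ) :
    symmPart (dirichletConj ε a Sig φ) m (m + η) =
      if ept d ε m ∈ Sig ∧ ept d ε (m + η) ∈ Sig then
        a η (ept d ε m) * Real.cosh ((φ (ept d ε m) - φ (ept d ε (m + η))) / ε)
      else 0 := by
  have hrev : a (-η) (ept d ε (m + η)) = a η (ept d ε m) := by rw [ept_add, ← hsym]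
  simp only [symmPart, dirichletConj, add_sub_cancel_left, sub_add_cancel_left, hrev,
    and_comm (a := ept d ε (m + η) ∈ Sig)]
  split_ifs
  · rw [Real.cosh_eq, ← neg_sub (φ (ept d ε m)), neg_div]
    ring
  · simp

theorem abs_dirichletConj_le (hε : 0 < ε)
    (hdecay : ∀ (η : Fin d → ℤ) (x : Ed d), |a η x| ≤ C * Real.exp (-(c * ‖zv η‖)))
    (hφ : LipschitzOnWith K φ Sig) (m n : Fin d → ℤ) :
    |dirichletConj ε a Sig φ m n| ≤ C * Real.exp (-((c - K) * ‖zv (n - m)‖)) := by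
  by_cases h : ept d ε m ∈ Sig ∧ ept d ε n ∈ Sig
  · have hexp : (φ (ept d ε m) - φ (ept d ε n)) / ε ≤ 0 + K * ‖zv (n - m)‖ := by
      have hlip := (le_abs_self _).trans (hφ.dist_le_mul _ h.1 _ h.2)
      rw [dist_ept hε.le] at hlip
      rw [div_le_iff₀ hε]
      linarith
    simpa [dirichletConj, h] using abs_mul_exp_le (hdecay (n - m) (ept d ε m)) hexp
  · have hC : 0 ≤ C := nonneg_of_abs_le_mul_exp (hdecay 0 0)
    rw [dirichletConj, if_neg h, abs_zero]
    positivity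

theorem hasBoundedRows_dirichletConj (hε : 0 < ε)
    (hdecay : ∀ (η : Fin d → ℤ) (x : Ed d), |a η x| ≤ C * Real.exp (-(c * ‖zv η‖)))
    (hφ : LipschitzOnWith K φ Sig) (hc : K < c) :
    HasBoundedRows (dirichletConj ε a Sig φ) :=
  .of_abs_le_sub ((summable_exp_neg_mul_norm_zv d (sub_pos.2 hc)).mul_left C)
    (abs_dirichletConj_le hε hdecay hφ)

theorem hasBoundedRows_swap_dirichletConj (hε : 0 < ε)
    (hdecay : ∀ (η : Fin d → ℤ) (x : Ed d), |a η x| ≤ C * Real.exp (-(c * ‖zv η‖)))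
    (hφ : LipschitzOnWith K φ Sig) (hc : K < c) :
    HasBoundedRows (Function.swap (dirichletConj ε a Sig φ)) := by
  refine .of_abs_le_sub ((summable_exp_neg_mul_norm_zv d (sub_pos.2 hc)).mul_left C) fun m n => ?_
  rw [zv_sub, norm_sub_rev, ← zv_sub]
  exact abs_dirichletConj_le hε hdecay hφ n m

-- Off `Σ` the value `φ(εm)` is arbitrary, which costs the factor `e^{B/ε}` depending on `m`.
theorem summable_conj_row (hε : 0 < ε)
    (hdecay : ∀ (η : Fin d → ℤ) (x : Ed d), |a η x| ≤ C * Real.exp (-(c * ‖zv η‖)))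
    (hφ : LipschitzOnWith K φ Sig) (hc : K < c)
    (hsupp : ∀ m : Fin d → ℤ, ept d ε m ∉ Sig → v m = 0) (hv : Memℓp v 2) (m : Fin d → ℤ) :
    Summable (fun η : Fin d → ℤ =>
      a η (ept d ε m) * Real.exp ((φ (ept d ε m) - φ (ept d ε (m + η))) / ε) * v (m + η)) := by
  obtain ⟨B, hB⟩ := exists_sub_le_add_mul_dist hφ (ept d ε m)
  obtain ⟨M, hM⟩ := (hv.of_exponent_ge le_top).bddAbove
  have hvM (n : Fin d → ℤ) : |v n| ≤ M := hM ⟨n, rfl⟩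
  have hM0 : 0 ≤ M := (abs_nonneg _).trans (hvM 0)
  refine Summable.of_norm_bounded ((((summable_exp_neg_mul_norm_zv d (sub_pos.2 hc)).mul_left
    C).mul_left (Real.exp (B / ε))).mul_right M) fun η => ?_
  by_cases hη : ept d ε (m + η) ∈ Sig
  · have hexp : (φ (ept d ε m) - φ (ept d ε (m + η))) / ε ≤ B / ε + K * ‖zv η‖ := by
      have hφη := hB _ hη
      rw [dist_ept hε.le, add_sub_cancel_left] at hφη
      rw [div_add' _ _ _ hε.ne', div_le_div_iff_of_pos_right hε]
      linarith
    have hentry := abs_mul_exp_le (hdecay η (ept d ε m)) hexp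
    rw [Real.norm_eq_abs, abs_mul]
    exact mul_le_mul hentry (hvM _) (abs_nonneg _) ((abs_nonneg _).trans hentry)
  · have hC : 0 ≤ C := nonneg_of_abs_le_mul_exp (hdecay 0 0)
    rw [hsupp _ hη, mul_zero, norm_zero]
    positivity

theorem ite_tsum_conj_add_mul (V : Ed d → ℝ)
    (hsupp : ∀ m : Fin d → ℤ, ept d ε m ∉ Sig → v m = 0) (m : Fin d → ℤ) :
    (if ept d ε m ∈ Sig then
        (∑' η : Fin d → ℤ,
          a η (ept d ε m) * Real.exp ((φ (ept d ε m) - φ (ept d ε (m + η))) / ε) * v (m + η))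
          + V (ept d ε m) * v m
      else 0) * v m =
      ((∑' n, dirichletConj ε a Sig φ m n * v n) + V (ept d ε m) * v m) * v m := by
  by_cases hm : ept d ε m ∈ Sig
  · rw [if_pos hm, ← (Equiv.addLeft m).tsum_eq fun n => dirichletConj ε a Sig φ m n * v n]
    congr 3
    funext η
    by_cases hη : ept d ε (m + η) ∈ Sig
    · simp [dirichletConj, hm, hη]
    · simp [hsupp _ hη]
  · simp [hsupp m hm]

theorem ite_add_tsum_cosh_mul
    (hsym : ∀ (η : Fin d → ℤ) (x : Ed d), a η x = a (-η) (x + ε • zv η)) (V : Ed d → ℝ)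
    (hsupp : ∀ m : Fin d → ℤ, ept d ε m ∉ Sig → v m = 0) (m : Fin d → ℤ) :
    (if ept d ε m ∈ Sig then
        (V (ept d ε m) + ∑' η : Fin d → ℤ,
          if ept d ε (m + η) ∈ Sig then
            a η (ept d ε m) * Real.cosh ((φ (ept d ε m) - φ (ept d ε (m + η))) / ε)
          else 0) * v m * v m
      else 0) =
      (V (ept d ε m) + ∑' n, symmPart (dirichletConj ε a Sig φ) m n) * v m ^ 2 := by
  by_cases hm : ept d ε m ∈ Sig
  · rw [← (Equiv.addLeft m).tsum_eq (symmPart (dirichletConj ε a Sig φ) m)]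
    simp only [Equiv.coe_addLeft, symmPart_dirichletConj_add hsym, hm, true_and, if_true]
    ring
  · simp [hm, hsupp m hm]

theorem ite_cosh_mul_sub_sq
    (hsym : ∀ (η : Fin d → ℤ) (x : Ed d), a η x = a (-η) (x + ε • zv η)) (v : (Fin d → ℤ) → ℝ)
    (m η : Fin d → ℤ) :
    (if ept d ε m ∈ Sig ∧ ept d ε (m + η) ∈ Sig then
        a η (ept d ε m) * Real.cosh ((φ (ept d ε m) - φ (ept d ε (m + η))) / ε) *
          (v m - v (m + η)) ^ 2
      else 0) =
      symmPart (dirichletConj ε a Sig φ) m (m + η) * (v m - v (m + η)) ^ 2 := by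
  rw [symmPart_dirichletConj_add hsym, ite_mul, zero_mul]

end DirichletKernel

theorem stmt16_general {d : ℕ} {ε : ℝ} (hε : 0 < ε)
    {a : (Fin d → ℤ) → Ed d → ℝ}
    (hsym : ∀ (η : Fin d → ℤ) (x : Ed d), a η x = a (-η) (x + ε • zv η))
    {C c : ℝ} (hdecay : ∀ (η : Fin d → ℤ) (x : Ed d), |a η x| ≤ C * Real.exp (-(c * ‖zv η‖)))
    {V : Ed d → ℝ} {Sig : Set (Ed d)} {φ : Ed d → ℝ}
    {K : NNReal} (hφ : LipschitzOnWith K φ Sig) (hc : K < c)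
    {v : (Fin d → ℤ) → ℝ} (hsupp : ∀ m : Fin d → ℤ, ept d ε m ∉ Sig → v m = 0)
    (hv : Memℓp v 2) (hV : Summable fun m : Fin d → ℤ => V (ept d ε m) * v m ^ 2) :
    (∀ m : Fin d → ℤ, ept d ε m ∈ Sig →
      Summable (fun η : Fin d → ℤ =>
        |if ept d ε (m + η) ∈ Sig then
            a η (ept d ε m) * Real.cosh ((φ (ept d ε m) - φ (ept d ε (m + η))) / ε)
          else 0|))
    ∧ Summable (fun p : (Fin d → ℤ) × (Fin d → ℤ) =>
        |if ept d ε p.1 ∈ Sig ∧ ept d ε (p.1 + p.2) ∈ Sig then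
            a p.2 (ept d ε p.1) *
              Real.cosh ((φ (ept d ε p.1) - φ (ept d ε (p.1 + p.2))) / ε) *
              (v p.1 - v (p.1 + p.2)) ^ 2
          else 0|)
    ∧ (∀ m : Fin d → ℤ, Summable (fun η : Fin d → ℤ =>
        |a η (ept d ε m) * Real.exp ((φ (ept d ε m) - φ (ept d ε (m + η))) / ε) *
          v (m + η)|))
    ∧ Summable (fun m : Fin d → ℤ =>
        |(if ept d ε m ∈ Sig then
            (∑' η : Fin d → ℤ,
              a η (ept d ε m) * Real.exp ((φ (ept d ε m) - φ (ept d ε (m + η))) / ε) *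
                v (m + η)) + V (ept d ε m) * v m
          else 0) * v m|)
    ∧ (∑' m : Fin d → ℤ,
        (if ept d ε m ∈ Sig then
            (∑' η : Fin d → ℤ,
              a η (ept d ε m) * Real.exp ((φ (ept d ε m) - φ (ept d ε (m + η))) / ε) *
                v (m + η)) + V (ept d ε m) * v m
          else 0) * v m)
      = (∑' m : Fin d → ℤ,
          (if ept d ε m ∈ Sig then
              (V (ept d ε m) +
                ∑' η : Fin d → ℤ,
                  if ept d ε (m + η) ∈ Sig then
                    a η (ept d ε m) *
                      Real.cosh ((φ (ept d ε m) - φ (ept d ε (m + η))) / ε)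
                  else 0) * v m * v m
            else 0))
        - (1/2) * ∑' p : (Fin d → ℤ) × (Fin d → ℤ),
            (if ept d ε p.1 ∈ Sig ∧ ept d ε (p.1 + p.2) ∈ Sig then
                a p.2 (ept d ε p.1) *
                  Real.cosh ((φ (ept d ε p.1) - φ (ept d ε (p.1 + p.2))) / ε) *
                  (v p.1 - v (p.1 + p.2)) ^ 2
              else 0) := by
  have hrows := hasBoundedRows_dirichletConj hε hdecay hφ hc
  have hcols := hasBoundedRows_swap_dirichletConj hε hdecay hφ hc
  have hv2 := summable_sq_of_memℓp_two hv
  have hsymm := hasBoundedRows_symmPart hrows hcols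
  have hsymm' : HasBoundedRows (Function.swap (symmPart (dirichletConj ε a Sig φ))) :=
    (swap_symmPart _).symm ▸ hsymm
  let shear := Equiv.prodShear (Equiv.refl (Fin d → ℤ)) Equiv.addLeft
  simp only [ite_tsum_conj_add_mul V hsupp, ite_add_tsum_cosh_mul hsym V hsupp,
    ite_cosh_mul_sub_sq hsym]
  refine ⟨fun m hm => ?_, ?_, fun m => (summable_conj_row hε hdecay hφ hc hsupp hv m).abs,
    (hrows.summable_form hcols hv2 hV).abs, ?_⟩
  · refine ((Equiv.addLeft m).summable_iff.2 (hsymm.summable_abs m)).congr fun η => ?_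
    simp only [Function.comp_apply, Equiv.coe_addLeft, symmPart_dirichletConj_add hsym, hm,
      true_and]
  · exact shear.summable_iff.2 (hsymm.summable_mul_sub_sq hsymm' hv2).abs
  · rw [tsum_form_eq hrows hcols hv2 hV]
    exact congrArg (_ - 1 / 2 * ·) (shear.tsum_eq _).symm

/-- Lemma 3.1 (conjugation formula): for the Dirichlet realization `H_ε^Σ` of
`H_ε = T_ε + V_ε` and a Lipschitz weight `φ` which is constant outside a bounded set,
the quadratic form of `e^{φ/ε} H_ε^Σ e^{-φ/ε}` on real `v ∈ ℓ²_{Σ_ε}` equals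
`⟨(V_ε + V^φ_{ε,Σ})v, v⟩ - (1/2) Σ_{x∈Σ_ε} Σ_{γ: x+γ∈Σ_ε} a_γ(x,ε)
cosh((φ(x)-φ(x+γ))/ε)(v(x)-v(x+γ))²`, all series converging absolutely. -/
theorem stmt16 (d : ℕ) (ε : ℝ) (hε : 0 < ε)
    (a : (Fin d → ℤ) → Ed d → ℝ)
    (hsym : ∀ (η : Fin d → ℤ) (x : Ed d), a η x = a (-η) (x + ε • zv η))
    (hdecay : ∀ c : ℝ, 0 < c → ∃ C : ℝ, 0 < C ∧ ∀ x : Ed d,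
      Summable (fun η : Fin d → ℤ => Real.exp (2 * c * ‖zv η‖) * (a η x) ^ 2) ∧
      ∑' η : Fin d → ℤ, Real.exp (2 * c * ‖zv η‖) * (a η x) ^ 2 ≤ C ^ 2)
    (V : Ed d → ℝ)
    (Sig : Set (Ed d))
    (φ : Ed d → ℝ)
    (hφlip : ∃ K : NNReal, LipschitzOnWith K φ Sig)
    (hφconst : ∃ R cst : ℝ, ∀ x ∈ Sig, R ≤ ‖x‖ → φ x = cst)
    (v : (Fin d → ℤ) → ℝ)
    (hsupp : ∀ m : Fin d → ℤ, ept d ε m ∉ Sig → v m = 0)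
    (hv2 : Memℓp v 2)
    (hdom : Memℓp (fun m : Fin d → ℤ => V (ept d ε m) * v m) 2) :
    (∀ m : Fin d → ℤ, ept d ε m ∈ Sig →
      Summable (fun η : Fin d → ℤ =>
        |if ept d ε (m + η) ∈ Sig then
            a η (ept d ε m) * Real.cosh ((φ (ept d ε m) - φ (ept d ε (m + η))) / ε)
          else 0|))
    ∧ Summable (fun p : (Fin d → ℤ) × (Fin d → ℤ) =>
        |if ept d ε p.1 ∈ Sig ∧ ept d ε (p.1 + p.2) ∈ Sig then
            a p.2 (ept d ε p.1) *
              Real.cosh ((φ (ept d ε p.1) - φ (ept d ε (p.1 + p.2))) / ε) *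
              (v p.1 - v (p.1 + p.2)) ^ 2
          else 0|)
    ∧ (∀ m : Fin d → ℤ, Summable (fun η : Fin d → ℤ =>
        |a η (ept d ε m) * Real.exp ((φ (ept d ε m) - φ (ept d ε (m + η))) / ε) *
          v (m + η)|))
    ∧ Summable (fun m : Fin d → ℤ =>
        |(if ept d ε m ∈ Sig then
            (∑' η : Fin d → ℤ,
              a η (ept d ε m) * Real.exp ((φ (ept d ε m) - φ (ept d ε (m + η))) / ε) *
                v (m + η)) + V (ept d ε m) * v m
          else 0) * v m|)
    ∧ (∑' m : Fin d → ℤ,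
        (if ept d ε m ∈ Sig then
            (∑' η : Fin d → ℤ,
              a η (ept d ε m) * Real.exp ((φ (ept d ε m) - φ (ept d ε (m + η))) / ε) *
                v (m + η)) + V (ept d ε m) * v m
          else 0) * v m)
      = (∑' m : Fin d → ℤ,
          (if ept d ε m ∈ Sig then
              (V (ept d ε m) +
                ∑' η : Fin d → ℤ,
                  if ept d ε (m + η) ∈ Sig then
                    a η (ept d ε m) *
                      Real.cosh ((φ (ept d ε m) - φ (ept d ε (m + η))) / ε)
                  else 0) * v m * v m
            else 0))
        - (1/2) * ∑' p : (Fin d → ℤ) × (Fin d → ℤ),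
            (if ept d ε p.1 ∈ Sig ∧ ept d ε (p.1 + p.2) ∈ Sig then
                a p.2 (ept d ε p.1) *
                  Real.cosh ((φ (ept d ε p.1) - φ (ept d ε (p.1 + p.2))) / ε) *
                  (v p.1 - v (p.1 + p.2)) ^ 2
              else 0) := by
  obtain ⟨K, hK⟩ := hφlip
  obtain ⟨C, hC, hCx⟩ := hdecay (K + 1) (by positivity)
  exact stmt16_general hε hsym
    (fun η x => abs_le_of_tsum_exp_mul_sq_le hC.le (hCx x).1 (hCx x).2 η) hK (lt_add_one _) hsupp
    hv2 ((summable_mul_of_memℓp_two hdom hv2).congr fun m => by ring)
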